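/- Suppose K, L ∈ K₀ⁿ, regarded as subsets of ℝ^{n-1} × ℝ, and suppose S(K*) = L*, where S denotes Steiner symmetrization about the hyperplane e_n^⊥. Then whenever x' ∈ ℝ^{n-1} and t, s ∈ ℝ with t ≠ −s satisfy h_K(x', t) = 1 = h_K(x', −s), one has h_L(x', t/2 + s/2) = 1. -/

import Mathlib

open MeasureTheory Filter Metric

/-- Orthogonal projection of `ℝⁿ` onto the hyperplane `u^⊥` through the origin. -/
noncomputable def steinerProj {n : ℕ} (u : EuclideanSpace ℝ (Fin n)) :
    EuclideanSpace ℝ (Fin n) → EuclideanSpace ℝ (Fin n) :=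
  fun z => ((Submodule.orthogonalProjectionOnto (Submodule.span ℝ {u})ᗮ) z : EuclideanSpace ℝ (Fin n))

/-- `ℓ_{E,u}(x')` : the one-dimensional Lebesgue measure of `{t : x' + t u ∈ E}`. -/
noncomputable def steinerLen {n : ℕ} (u : EuclideanSpace ℝ (Fin n))
    (E : Set (EuclideanSpace ℝ (Fin n))) (x' : EuclideanSpace ℝ (Fin n)) : ℝ :=
  (volume {t : ℝ | x' + t • u ∈ E}).toReal

/-- Steiner symmetrization of `E` about the hyperplane `u^⊥`:
`S_u E = {x' + t u : x' ∈ π_u(E), |t| ≤ ℓ_{E,u}(x')/2}`. -/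
noncomputable def steiner {n : ℕ} (u : EuclideanSpace ℝ (Fin n))
    (E : Set (EuclideanSpace ℝ (Fin n))) : Set (EuclideanSpace ℝ (Fin n)) :=
  {x | ∃ x' ∈ steinerProj u '' E, ∃ t : ℝ, |t| ≤ steinerLen u E x' / 2 ∧ x = x' + t • u}

/-- The last standard basis vector `e_n` of `ℝⁿ` (junk value `0` if `n = 0`). -/
noncomputable def lastDir (n : ℕ) : EuclideanSpace ℝ (Fin n) :=
  if h : n = 0 then 0
  else EuclideanSpace.single ⟨n - 1, Nat.sub_lt (Nat.pos_of_ne_zero h) one_pos⟩ 1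

/-- `max_{x ∈ E} |x|` for a (nonempty compact) set `E ⊆ ℝⁿ`. -/
noncomputable def maxNorm {n : ℕ} (E : Set (EuclideanSpace ℝ (Fin n))) : ℝ :=
  sSup ((fun x => ‖x‖) '' E)

/-- Support function `h_K(z) = max {z·y : y ∈ K}` of a set `K ⊆ ℝⁿ`. -/
noncomputable def suppFn {n : ℕ} (K : Set (EuclideanSpace ℝ (Fin n)))
    (z : EuclideanSpace ℝ (Fin n)) : ℝ :=
  sSup ((fun y => (inner ℝ z y : ℝ)) '' K)

/-- Polar body `K* = {x : x·z ≤ 1 for all z ∈ K}`. -/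
def polarBody {n : ℕ} (K : Set (EuclideanSpace ℝ (Fin n))) :
    Set (EuclideanSpace ℝ (Fin n)) :=
  {x | ∀ z ∈ K, (inner ℝ x z : ℝ) ≤ 1}

theorem lastDir_ne_zero {n : ℕ} (hn : n ≠ 0) : lastDir n ≠ 0 := by
  simp [lastDir, hn]

theorem suppFn_le_iff {n : ℕ} {K : Set (EuclideanSpace ℝ (Fin n))} (hK : IsCompact K)
    (hne : K.Nonempty) (z : EuclideanSpace ℝ (Fin n)) (c : ℝ) :
    suppFn K z ≤ c ↔ ∀ y ∈ K, (inner ℝ z y : ℝ) ≤ c := by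
  have hbdd : BddAbove ((fun y => (inner ℝ z y : ℝ)) '' K) :=
    (hK.image (by fun_prop)).bddAbove
  rw [suppFn, csSup_le_iff hbdd (hne.image _), Set.forall_mem_image]

theorem mem_polarBody_iff_suppFn_le_one {n : ℕ} {K : Set (EuclideanSpace ℝ (Fin n))}
    (hK : IsCompact K) (hne : K.Nonempty) (z : EuclideanSpace ℝ (Fin n)) :
    z ∈ polarBody K ↔ suppFn K z ≤ 1 :=
  (suppFn_le_iff hK hne z 1).symm

/-- The support function of a nonempty compact set is sublinear, hence convex. -/
theorem convexOn_suppFn {n : ℕ} {K : Set (EuclideanSpace ℝ (Fin n))} (hK : IsCompact K)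
    (hne : K.Nonempty) : ConvexOn ℝ Set.univ (suppFn K) := by
  refine ⟨convex_univ, fun x _ y _ a b ha hb _ => (suppFn_le_iff hK hne _ _).2 fun w hw => ?_⟩
  have hx := (suppFn_le_iff hK hne x _).1 le_rfl w hw
  have hy := (suppFn_le_iff hK hne y _).1 le_rfl w hw
  simp only [inner_add_left, real_inner_smul_left, smul_eq_mul]
  gcongr

theorem suppFn_smul_of_nonneg {n : ℕ} (K : Set (EuclideanSpace ℝ (Fin n)))
    (z : EuclideanSpace ℝ (Fin n)) {c : ℝ} (hc : 0 ≤ c) :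
    suppFn K (c • z) = c * suppFn K z := by
  rw [suppFn, suppFn, ← smul_eq_mul, ← Real.sSup_smul_of_nonneg hc, ← Set.image_smul,
    Set.image_image]
  simp only [real_inner_smul_left, smul_eq_mul]

theorem continuous_suppFn {n : ℕ} {K : Set (EuclideanSpace ℝ (Fin n))} (hK : IsCompact K)
    (hne : K.Nonempty) : Continuous (suppFn K) :=
  continuousOn_univ.1 ((convexOn_suppFn hK hne).continuousOn isOpen_univ)

theorem isBounded_polarBody {n : ℕ} {K : Set (EuclideanSpace ℝ (Fin n))}
    (hK : (0 : EuclideanSpace ℝ (Fin n)) ∈ interior K) :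
    Bornology.IsBounded (polarBody K) := by
  obtain ⟨ε, hε, hball⟩ := nhds_basis_closedBall.mem_iff.1 (mem_interior_iff_mem_nhds.1 hK)
  refine isBounded_iff_forall_norm_le.2 ⟨1 / ε, fun x hx => ?_⟩
  rcases eq_or_ne x 0 with rfl | hx0
  · simp only [norm_zero]; positivity
  have hpos : 0 < ‖x‖ := norm_pos_iff.2 hx0
  have hmem : (ε / ‖x‖) • x ∈ K := hball (by
    rw [mem_closedBall_zero_iff, norm_smul, Real.norm_of_nonneg (by positivity)]
    field_simp; exact le_rfl)
  have h := hx _ hmem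
  rw [real_inner_smul_right, real_inner_self_eq_norm_sq] at h
  rw [le_div_iff₀ hε]
  have : ε / ‖x‖ * ‖x‖ ^ 2 = ‖x‖ * ε := by field_simp
  linarith

theorem steinerProj_add_smul {n : ℕ} {u x' : EuclideanSpace ℝ (Fin n)}
    (hx : x' ∈ (Submodule.span ℝ {u})ᗮ) (t : ℝ) : steinerProj u (x' + t • u) = x' := by
  have hu : u ∈ (Submodule.span ℝ {u})ᗮᗮ :=
    Submodule.le_orthogonal_orthogonal _ (Submodule.mem_span_singleton_self u)
  exact Submodule.eq_starProjection_of_mem_orthogonal (u := x' + t • u) hx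
    (by rw [add_sub_cancel_left]; exact Submodule.smul_mem _ t hu)

/-- Membership in the Steiner symmetral, read off on the line through `x'` parallel to `u`. -/
theorem add_smul_mem_steiner_iff {n : ℕ} {u x' : EuclideanSpace ℝ (Fin n)} (hu : u ≠ 0)
    (hx : x' ∈ (Submodule.span ℝ {u})ᗮ) (E : Set (EuclideanSpace ℝ (Fin n))) (r : ℝ) :
    x' + r • u ∈ steiner u E ↔ (∃ q : ℝ, x' + q • u ∈ E) ∧ |r| ≤ steinerLen u E x' / 2 := by
  constructor
  · rintro ⟨x'', ⟨z, hz, rfl⟩, t, ht, heq⟩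
    have hz' : steinerProj u z ∈ (Submodule.span ℝ {u})ᗮ := Submodule.coe_mem _
    have hxz : x' = steinerProj u z := by
      rw [← steinerProj_add_smul hx r, heq, steinerProj_add_smul hz' t]
    rw [← hxz] at heq ht
    obtain rfl : r = t := smul_left_injective ℝ hu (add_left_cancel heq)
    refine ⟨?_, ht⟩
    have hsub : z - x' ∈ Submodule.span ℝ {u} := by
      have h := Submodule.sub_starProjection_mem_orthogonal (K := (Submodule.span ℝ {u})ᗮ) z
      rw [Submodule.orthogonal_orthogonal] at h
      rw [hxz]
      exact h
    obtain ⟨q, hq⟩ := Submodule.mem_span_singleton.1 hsub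
    exact ⟨q, by rwa [hq, add_sub_cancel]⟩
  · rintro ⟨⟨q, hq⟩, hr⟩
    exact ⟨x', ⟨_, hq, steinerProj_add_smul hx q⟩, r, hr, rfl⟩

/-- If a convex function on `ℝ` takes a value below `c` and equals `c` at `a < b`, then its
sublevel set at `c` lies in `[a, b]`. -/
theorem ConvexOn.sublevel_subset_Icc {f : ℝ → ℝ} (hf : ConvexOn ℝ Set.univ f) {a b c r₀ : ℝ}
    (hab : a < b) (ha : f a = c) (hb : f b = c) (hr₀ : f r₀ < c) :
    {r | f r ≤ c} ⊆ Set.Icc a b := by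
  have key : ∀ {p q : ℝ}, f p < c → f q ≤ c → ∀ m ∈ openSegment ℝ p q, f m < c := by
    rintro p q hp hq m ⟨α, β, hα, hβ, hαβ, rfl⟩
    calc f (α • p + β • q) ≤ α * f p + β * f q :=
          hf.2 trivial trivial hα.le hβ.le hαβ
      _ < α * c + β * c := add_lt_add_of_lt_of_le (by gcongr) (by gcongr)
      _ = c := by rw [← add_mul, hαβ, one_mul]
  have between : ∀ {p q m : ℝ}, f p < c → f q ≤ c → p < m → m < q → f m < c := by
    intro p q m hp hq h1 h2
    exact key hp hq m (by rw [openSegment_eq_Ioo (h1.trans h2)]; exact ⟨h1, h2⟩)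
  have between' : ∀ {p q m : ℝ}, f p < c → f q ≤ c → q < m → m < p → f m < c := by
    intro p q m hp hq h1 h2
    exact key hp hq m (by
      rw [openSegment_symm, openSegment_eq_Ioo (h1.trans h2)]; exact ⟨h1, h2⟩)
  have h₀a : a < r₀ := by
    by_contra! h
    rcases h.lt_or_eq with h | rfl
    · exact (between hr₀ hb.le h hab).ne ha
    · exact hr₀.ne ha
  have h₀b : r₀ < b := by
    by_contra! h
    rcases h.lt_or_eq with h | rfl
    · exact (between' hr₀ ha.le hab h).ne hb
    · exact hr₀.ne hb
  intro r hr
  constructor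
  · by_contra! h
    exact (between' hr₀ hr h h₀a).ne ha
  · by_contra! h
    exact (between hr₀ hr h₀b h).ne hb

/-- If `S(K*) = L*` (Steiner symmetrization about `e_n^⊥`), then `h_K(x',t) = 1 = h_K(x',-s)`
with `t ≠ -s` implies `h_L(x', t/2 + s/2) = 1`. -/
theorem stmt8 (n : ℕ) (hn : 2 ≤ n)
    (K L : Set (EuclideanSpace ℝ (Fin n)))
    (hKcomp : IsCompact K) (hKconv : Convex ℝ K)
    (hK0 : (0 : EuclideanSpace ℝ (Fin n)) ∈ interior K)
    (hLcomp : IsCompact L) (hLconv : Convex ℝ L)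
    (hL0 : (0 : EuclideanSpace ℝ (Fin n)) ∈ interior L)
    (hS : steiner (lastDir n) (polarBody K) = polarBody L) :
    ∀ x' ∈ (Submodule.span ℝ {lastDir n})ᗮ, ∀ t s : ℝ, t ≠ -s →
      suppFn K (x' + t • lastDir n) = 1 →
      suppFn K (x' + (-s) • lastDir n) = 1 →
      suppFn L (x' + (t / 2 + s / 2) • lastDir n) = 1 := by
  intro x' hx' t s hts ht hs
  have hu : lastDir n ≠ 0 := lastDir_ne_zero (by omega)
  have hKne : K.Nonempty := ⟨0, interior_subset hK0⟩
  have hLne : L.Nonempty := ⟨0, interior_subset hL0⟩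
  set u := lastDir n
  set ρ : ℝ := t / 2 + s / 2 with hρ
  have hρ0 : ρ ≠ 0 := fun h => hts (by linarith)
  let f : ℝ → ℝ := fun r => suppFn K (x' + r • u)
  have hf : ConvexOn ℝ Set.univ f := by
    simpa [Function.comp_def, f, AffineMap.lineMap_apply, add_comm] using
      (convexOn_suppFn hKcomp hKne).comp_affineMap (AffineMap.lineMap x' (x' + u))
  have hsec : {r : ℝ | x' + r • u ∈ polarBody K} = {r | f r ≤ 1} := by
    ext r
    exact mem_polarBody_iff_suppFn_le_one hKcomp hKne _
  have hLmem := mem_polarBody_iff_suppFn_le_one hLcomp hLne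
  have hsub : Set.uIcc (-s) t ⊆ {r : ℝ | x' + r • u ∈ polarBody K} := by
    have hconv : Convex ℝ {r | f r ≤ 1} := by simpa using hf.convex_le 1
    rw [hsec, ← segment_eq_uIcc]
    exact hconv.segment_subset hs.le ht.le
  have hfin : volume {r : ℝ | x' + r • u ∈ polarBody K} ≠ ⊤ := by
    refine Bornology.IsBounded.measure_lt_top ?_ |>.ne
    obtain ⟨C, hC⟩ := isBounded_iff_forall_norm_le.1 (isBounded_polarBody hK0)
    refine isBounded_iff_forall_norm_le.2 ⟨(C + ‖x'‖) / ‖u‖, fun r hr => ?_⟩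
    rw [le_div_iff₀ (norm_pos_iff.2 hu), ← norm_smul]
    calc ‖r • u‖ = ‖(x' + r • u) - x'‖ := by rw [add_sub_cancel_left]
      _ ≤ ‖x' + r • u‖ + ‖x'‖ := norm_sub_le _ _
      _ ≤ C + ‖x'‖ := by gcongr; exact hC _ hr
  have habs : |t - -s| = 2 * |ρ| := by
    rw [show t - -s = 2 * ρ by rw [hρ]; ring, abs_mul, abs_two]
  have hvol : (volume (Set.uIcc (-s) t)).toReal = 2 * |ρ| := by
    rw [Real.volume_interval, ENNReal.toReal_ofReal (abs_nonneg _), habs]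
  have hle : suppFn L (x' + ρ • u) ≤ 1 := by
    rw [← hLmem, ← hS, add_smul_mem_steiner_iff hu hx']
    refine ⟨⟨t, hsub Set.right_mem_uIcc⟩, ?_⟩
    have := ENNReal.toReal_mono hfin (measure_mono hsub)
    rw [hvol] at this
    rw [steinerLen]
    linarith
  refine hle.antisymm (not_lt.1 fun hlt => ?_)
  have hcont := continuous_suppFn hLcomp hLne
  have hev : ∀ᶠ c : ℝ in nhdsWithin 1 (Set.Ioi 1),
      suppFn L (x' + (c * ρ) • u) < 1 ∧ suppFn L (c • x' + (c * ρ) • u) < 1 := by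
    refine nhdsWithin_le_nhds (Filter.Eventually.and ?_ ?_)
    · refine (Continuous.tendsto (f := fun c : ℝ => suppFn L (x' + (c * ρ) • u))
        (by fun_prop) 1).eventually_lt_const ?_
      simpa using hlt
    · refine (Continuous.tendsto (f := fun c : ℝ => suppFn L (c • x' + (c * ρ) • u))
        (by fun_prop) 1).eventually_lt_const ?_
      simpa using hlt
  obtain ⟨c, ⟨hc1, hc2⟩, hc : 1 < c⟩ := (hev.and self_mem_nhdsWithin).exists
  have hcpos : 0 < c := one_pos.trans hc
  obtain ⟨r₀, hr₀⟩ : ∃ r₀, f r₀ < 1 := by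
    have hmem := (hLmem _).2 hc2.le
    rw [← hS, add_smul_mem_steiner_iff hu (Submodule.smul_mem _ c hx')] at hmem
    obtain ⟨⟨q, hq⟩, -⟩ := hmem
    rw [mem_polarBody_iff_suppFn_le_one hKcomp hKne,
      show c • x' + q • u = c • (x' + (q / c) • u) by
        rw [smul_add, smul_smul, mul_div_cancel₀ _ hcpos.ne'],
      suppFn_smul_of_nonneg K _ hcpos.le] at hq
    refine ⟨q / c, ?_⟩
    by_contra! h
    have : c * 1 ≤ c * f (q / c) := by gcongr
    linarith
  have hsup : {r : ℝ | x' + r • u ∈ polarBody K} ⊆ Set.uIcc (-s) t := by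
    rw [hsec]
    rcases lt_or_gt_of_ne hts with h | h
    · rw [Set.uIcc_of_ge h.le]
      exact hf.sublevel_subset_Icc h ht hs hr₀
    · rw [Set.uIcc_of_le h.le]
      exact hf.sublevel_subset_Icc h hs ht hr₀
  have hmem := (hLmem _).2 hc1.le
  rw [← hS, add_smul_mem_steiner_iff hu hx', steinerLen, hsup.antisymm hsub, hvol, abs_mul,
    abs_of_pos hcpos] at hmem
  have hρpos : 0 < |ρ| := abs_pos.2 hρ0
  nlinarith [hmem.2]
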